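/- Let μ ∈ C and set λ = μ + ρ_μ (the shift of μ). Assume μ is admissible, i.e. (μ − ρ(μ), α∨) ∈ ℤ for every α ∈ Δ, and that λ is regular, i.e. (λ,α) ≠ 0 for every α ∈ Δ. Then λ ∈ ρ + C (λ lies in the shifted Weyl chamber), λ − ρ = μ − ρ(μ) (so λ is admissible), and (λ − ρ, α) = 0 for every α ∈ Δ⁺ with (α,μ) = 0 (λ − ρ lies in the closure of the face of C containing μ). -/

import Mathlib

open scoped RealInnerProductSpace
open Finset

/-!
Reflecting repeatedly in simple roots that pair negatively with the current vector moves `λ` to a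
dominant vector `y`, and no such step decreases the inner product with the dominant vector `μ`, so
`(y, μ) ≥ (λ, μ)`. Since `y` is regular and pairs integrally with the simple coroots, `y - ρ` is
dominant, hence `(y, ρ_μ) ≥ (ρ, ρ_μ)`. But `λ - ρ = μ - ρ(μ)` is orthogonal to the roots
orthogonal to `μ`, so `(ρ, ρ_μ) = (λ, ρ_μ)`, and adding up gives `(y, λ) ≥ (λ, λ)`. As `y` and `λ`
have the same norm, `y = λ`.
-/

section Coroot

variable {E : Type*} [NormedAddCommGroup E] [InnerProductSpace ℝ E]

/-- The coroot `α∨ = 2α/(α, α)` of a vector `α`, as the linear functional `x ↦ (x, α∨)`; it is zero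
for `α = 0`. -/
noncomputable def coroot (α : E) : Module.Dual ℝ E where
  toFun x := 2 * ⟪x, α⟫ / ⟪α, α⟫
  map_add' x y := by rw [inner_add_left]; ring
  map_smul' c x := by simp only [real_inner_smul_left, RingHom.id_apply, smul_eq_mul]; ring

/-- The reflection `s_α` in the hyperplane orthogonal to `α`. -/
noncomputable abbrev rootReflection (α : E) : E ≃ₗᵢ[ℝ] E := (ℝ ∙ α)ᗮ.reflection

theorem coroot_apply (α x : E) : coroot α x = 2 * ⟪x, α⟫ / ⟪α, α⟫ := rfl

theorem coroot_self {α : E} (hα : α ≠ 0) : coroot α α = 2 :=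
  mul_div_cancel_right₀ 2 (inner_self_ne_zero.2 hα)

theorem coroot_pos_iff {α : E} (hα : α ≠ 0) (x : E) : 0 < coroot α x ↔ 0 < ⟪x, α⟫ := by
  rw [coroot_apply, div_pos_iff_of_pos_right (real_inner_self_pos.2 hα),
    mul_pos_iff_of_pos_left two_pos]

theorem coroot_nonneg_iff {α : E} (hα : α ≠ 0) (x : E) : 0 ≤ coroot α x ↔ 0 ≤ ⟪x, α⟫ := by
  rw [coroot_apply, le_div_iff₀ (real_inner_self_pos.2 hα), zero_mul,
    mul_nonneg_iff_of_pos_left two_pos]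

theorem coroot_eq_zero_iff {α : E} (hα : α ≠ 0) (x : E) : coroot α x = 0 ↔ ⟪x, α⟫ = 0 := by
  rw [coroot_apply, div_eq_zero_iff, or_iff_left (inner_self_ne_zero.2 hα),
    mul_eq_zero_iff_left two_ne_zero]

theorem rootReflection_apply (α x : E) : rootReflection α x = x - coroot α x • α := by
  rw [Submodule.reflection_orthogonal_apply, Submodule.reflection_singleton_apply, coroot_apply,
    real_inner_self_eq_norm_sq, real_inner_comm, RCLike.ofReal_real_eq_id, id]
  module

theorem coroot_rootReflection {α : E} (hα : α ≠ 0) (x : E) :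
    coroot α (rootReflection α x) = -coroot α x := by
  rw [rootReflection_apply, map_sub, map_smul, coroot_self hα, smul_eq_mul]
  ring

theorem inner_rootReflection_left (α x y : E) :
    ⟪rootReflection α x, y⟫ = ⟪x, rootReflection α y⟫ := by
  rw [LinearIsometryEquiv.inner_map_eq_flip, Submodule.reflection_symm]

theorem inner_le_inner_rootReflection {α x y : E} (hx : ⟪x, α⟫ ≤ 0) (hy : 0 ≤ ⟪y, α⟫) :
    ⟪x, y⟫ ≤ ⟪rootReflection α x, y⟫ := by
  have hcoroot : coroot α x ≤ 0 := by
    rw [coroot_apply]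
    exact div_nonpos_of_nonpos_of_nonneg (by linarith) real_inner_self_nonneg
  rw [rootReflection_apply, inner_sub_left, real_inner_smul_left, real_inner_comm y α]
  linarith [mul_nonpos_of_nonpos_of_nonneg hcoroot hy]

theorem coroot_sum_eq_zero_of_rootReflection_mem {α : E} (hα : α ≠ 0) {s : Finset E}
    (hs : ∀ β ∈ s, rootReflection α β ∈ s) : coroot α (∑ β ∈ s, β) = 0 := by
  have hinvol := (ℝ ∙ α)ᗮ.reflection_reflection
  have hperm : ∑ β ∈ s, rootReflection α β = ∑ β ∈ s, β :=
    sum_nbij' (rootReflection α) (rootReflection α) hs hs (fun β _ => hinvol β)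
      (fun β _ => hinvol β) fun _ _ => rfl
  have hneg := coroot_rootReflection hα (∑ β ∈ s, β)
  rw [map_sum, hperm] at hneg
  exact self_eq_neg.1 hneg

/-- Strict Cauchy–Schwarz bounds the pairing by `2 * ‖β‖ / ‖α‖ ≤ 2`. -/
theorem coroot_lt_two {α β : E} (hβα : β ∉ ℝ ∙ α) (hα : α ≠ 0) (hle : ‖β‖ ≤ ‖α‖) :
    coroot α β < 2 := by
  have hcs : ⟪β, α⟫ < ‖β‖ * ‖α‖ := by
    refine inner_lt_norm_mul_iff_real.2 fun h => hβα ?_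
    exact ((ℝ ∙ α).smul_mem_iff (norm_ne_zero_iff.2 hα)).1
      (h ▸ Submodule.smul_mem _ _ (Submodule.mem_span_singleton_self α))
  rw [coroot_apply, div_lt_iff₀ (real_inner_self_pos.2 hα), real_inner_self_eq_norm_mul_norm]
  linarith [mul_le_mul_of_nonneg_right hle (norm_nonneg α)]

end Coroot

section PositiveRoots

variable {E : Type*} [NormedAddCommGroup E] [InnerProductSpace ℝ E]

/-- The elements of `Φ` pairing positively with `v`. For `v` regular they form the positive system
`Δ⁺` defined by `v`; for arbitrary `μ` they are the roots whose half sum is Duflo's `ρ(μ)`. -/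
noncomputable def posRoots (Φ : Finset E) (v : E) : Finset E := {α ∈ Φ | 0 < ⟪α, v⟫}

/-- Half the sum of the elements of `s`, giving the various elements `ρ`. -/
noncomputable def halfSum (s : Finset E) : E := (2 : ℝ)⁻¹ • ∑ α ∈ s, α

/-- `α` is a simple root of the positive system of `Φ` defined by `v`. -/
def IsSimpleRoot (Φ : Finset E) (v α : E) : Prop :=
  α ∈ posRoots Φ v ∧ ∀ β ∈ posRoots Φ v, ∀ γ ∈ posRoots Φ v, β + γ ≠ α

/-- `x` lies in the closed positive Weyl chamber. -/
def IsDominant (Φ : Finset E) (v x : E) : Prop := ∀ α ∈ posRoots Φ v, 0 ≤ ⟪x, α⟫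

/-- `x` is orthogonal to no root and pairs integrally with every simple coroot. -/
structure IsRegularWeight (Φ : Finset E) (v x : E) : Prop where
  inner_ne_zero : ∀ α ∈ Φ, ⟪x, α⟫ ≠ 0
  exists_int_coroot : ∀ α, IsSimpleRoot Φ v α → ∃ n : ℤ, coroot α x = n

variable {Φ : Finset E} {v : E}

theorem mem_posRoots {α : E} : α ∈ posRoots Φ v ↔ α ∈ Φ ∧ 0 < ⟪α, v⟫ := mem_filter

theorem IsSimpleRoot.mem {α : E} (hα : IsSimpleRoot Φ v α) : α ∈ Φ := (mem_posRoots.1 hα.1).1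

theorem posRoots_induction {p : E → Prop} (simple : ∀ α, IsSimpleRoot Φ v α → p α)
    (add : ∀ β γ, p β → p γ → p (β + γ)) {α : E} (hα : α ∈ posRoots Φ v) : p α := by
  classical
  by_contra hpα
  obtain ⟨δ, hδ, hmin⟩ := exists_min_image {δ ∈ posRoots Φ v | ¬p δ} (⟪·, v⟫)
    ⟨α, mem_filter.2 ⟨hα, hpα⟩⟩
  obtain ⟨hδ, hpδ⟩ := mem_filter.1 hδ
  have p_of_lt {β : E} (hβ : β ∈ posRoots Φ v) (hlt : ⟪β, v⟫ < ⟪δ, v⟫) : p β :=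
    of_not_not fun hpβ => hlt.not_ge (hmin β (mem_filter.2 ⟨hβ, hpβ⟩))
  refine hpδ (simple δ ⟨hδ, fun β hβ γ hγ hsum => hpδ ?_⟩)
  have hinner : ⟪β, v⟫ + ⟪γ, v⟫ = ⟪δ, v⟫ := by rw [← inner_add_left, hsum]
  have hβv := (mem_posRoots.1 hβ).2
  have hγv := (mem_posRoots.1 hγ).2
  exact hsum ▸ add β γ (p_of_lt hβ (by linarith)) (p_of_lt hγ (by linarith))

theorem isDominant_of_forall_isSimpleRoot {x : E}
    (hx : ∀ α, IsSimpleRoot Φ v α → 0 ≤ ⟪x, α⟫) : IsDominant Φ v x := fun _ =>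
  posRoots_induction hx fun β γ hβ hγ => by
    rw [inner_add_right]
    exact add_nonneg hβ hγ

theorem IsDominant.inner_halfSum_nonneg {x : E} (hx : IsDominant Φ v x) {s : Finset E}
    (hs : s ⊆ posRoots Φ v) : 0 ≤ ⟪x, halfSum s⟫ := by
  rw [halfSum, real_inner_smul_right, inner_sum]
  exact mul_nonneg (by norm_num) (sum_nonneg fun α hα => hx α (hs hα))

theorem inner_halfSum_eq_zero {x : E} {s : Finset E} (hs : ∀ α ∈ s, ⟪x, α⟫ = 0) :
    ⟪x, halfSum s⟫ = 0 := by
  rw [halfSum, real_inner_smul_right, inner_sum, sum_eq_zero hs, mul_zero]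

theorem eq_add_halfSum_of_norm_eq {μ ρ y : E} {s : Finset E} (hs : s ⊆ posRoots Φ v)
    (horth : ∀ α ∈ s, ⟪μ + halfSum s - ρ, α⟫ = 0) (hy : IsDominant Φ v (y - ρ))
    (hnorm : ‖y‖ = ‖μ + halfSum s‖) (hle : ⟪μ + halfSum s, μ⟫ ≤ ⟪y, μ⟫) :
    y = μ + halfSum s := by
  have hhalf : ⟪μ + halfSum s, halfSum s⟫ ≤ ⟪y, halfSum s⟫ := by
    have hdom := hy.inner_halfSum_nonneg hs
    have hzero := inner_halfSum_eq_zero horth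
    rw [inner_sub_left] at hdom hzero
    linarith
  have hinner : ‖μ + halfSum s‖ ^ 2 ≤ ⟪y, μ + halfSum s⟫ := by
    rw [← real_inner_self_eq_norm_sq, inner_add_right, inner_add_right y]
    exact add_le_add hle hhalf
  have hdist : ‖y - (μ + halfSum s)‖ ^ 2 ≤ 0 := by
    rw [norm_sub_sq_real, hnorm]
    linarith
  exact sub_eq_zero.1 (norm_eq_zero.1 ((sq_nonpos_iff _).1 hdist))

end PositiveRoots

/-- A reduced crystallographic root system, as a finite set of vectors; it need not span. -/
structure IsReducedRootSystem {E : Type*} [NormedAddCommGroup E] [InnerProductSpace ℝ E]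
    (Φ : Finset E) : Prop where
  zero_notMem : (0 : E) ∉ Φ
  eq_one_or_neg_one : ∀ α ∈ Φ, ∀ t : ℝ, t • α ∈ Φ → t = 1 ∨ t = -1
  sub_coroot_smul_mem : ∀ α ∈ Φ, ∀ β ∈ Φ, β - coroot α β • α ∈ Φ
  exists_int_coroot : ∀ α ∈ Φ, ∀ β ∈ Φ, ∃ n : ℤ, coroot α β = n

namespace IsReducedRootSystem

variable {E : Type*} [NormedAddCommGroup E] [InnerProductSpace ℝ E] {Φ : Finset E}

theorem ne_zero (hΦ : IsReducedRootSystem Φ) {α : E} (hα : α ∈ Φ) : α ≠ 0 :=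
  ne_of_mem_of_not_mem hα hΦ.zero_notMem

theorem rootReflection_mem (hΦ : IsReducedRootSystem Φ) {α β : E} (hα : α ∈ Φ) (hβ : β ∈ Φ) :
    rootReflection α β ∈ Φ :=
  rootReflection_apply α β ▸ hΦ.sub_coroot_smul_mem α hα β hβ

theorem neg_mem (hΦ : IsReducedRootSystem Φ) {α : E} (hα : α ∈ Φ) : -α ∈ Φ := by
  simpa only [Submodule.reflection_orthogonalComplement_singleton_eq_neg] using
    hΦ.rootReflection_mem hα hα

theorem sub_mem_of_inner_pos (hΦ : IsReducedRootSystem Φ) {α β : E} (hα : α ∈ Φ) (hβ : β ∈ Φ)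
    (hβα : β ∉ ℝ ∙ α) (hpos : 0 < ⟪β, α⟫) : β - α ∈ Φ := by
  have sub_mem_of_norm_le {γ δ : E} (hγ : γ ∈ Φ) (hδ : δ ∈ Φ) (hδγ : δ ∉ ℝ ∙ γ)
      (hpos : 0 < ⟪δ, γ⟫) (hle : ‖δ‖ ≤ ‖γ‖) : δ - γ ∈ Φ := by
    obtain ⟨n, hn⟩ := hΦ.exists_int_coroot γ hγ δ hδ
    have hn_pos : 0 < n := by exact_mod_cast hn ▸ (coroot_pos_iff (hΦ.ne_zero hγ) δ).2 hpos
    have hn_lt : n < 2 := by exact_mod_cast hn ▸ coroot_lt_two hδγ (hΦ.ne_zero hγ) hle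
    obtain rfl : n = 1 := by lia
    simpa [hn] using hΦ.sub_coroot_smul_mem γ hγ δ hδ
  rcases le_total ‖β‖ ‖α‖ with hle | hle
  · exact sub_mem_of_norm_le hα hβ hβα hpos hle
  · have hαβ : α ∉ ℝ ∙ β := fun h => hβα <| by
      obtain ⟨t, rfl⟩ := Submodule.mem_span_singleton.1 h
      exact (Submodule.smul_mem_iff _ (left_ne_zero_of_smul (hΦ.ne_zero hα))).1
        (Submodule.mem_span_singleton_self _)
    rw [← neg_sub]
    exact hΦ.neg_mem (sub_mem_of_norm_le hβ hα hαβ (real_inner_comm α β ▸ hpos) hle)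

/-- The first half of the root string descends by `sub_mem_of_inner_pos`; the second half is its
image under the reflection in `α`. -/
theorem sub_nsmul_mem (hΦ : IsReducedRootSystem Φ) {α β : E} (hα : α ∈ Φ) (hβ : β ∈ Φ)
    (hβα : β ∉ ℝ ∙ α) {k : ℕ} (hk : coroot α β = k) {j : ℕ} (hj : j ≤ k) : β - j • α ∈ Φ := by
  have hα0 := hΦ.ne_zero hα
  have coroot_string (i : ℕ) : coroot α (β - i • α) = k - 2 * i := by
    rw [map_sub, map_nsmul, hk, coroot_self hα0, nsmul_eq_mul]
    ring
  have first_half (i : ℕ) (hi : 2 * i ≤ k + 1) : β - i • α ∈ Φ := by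
    induction i with
    | zero => simpa using hβ
    | succ i ih =>
      rw [succ_nsmul, ← sub_sub]
      refine hΦ.sub_mem_of_inner_pos hα (ih (by lia)) ?_ ?_
      · rwa [Submodule.sub_mem_iff_left]
        exact nsmul_mem (Submodule.mem_span_singleton_self α) i
      · rw [← coroot_pos_iff hα0, coroot_string, sub_pos]
        exact_mod_cast (by lia : 2 * i < k)
  rcases le_or_gt (2 * j) (k + 1) with hjk | hjk
  · exact first_half j hjk
  · have hmem := hΦ.sub_coroot_smul_mem α hα _ (first_half (k - j) (by lia))
    rw [coroot_string, Nat.cast_sub hj] at hmem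
    convert hmem using 1
    rw [← Nat.cast_smul_eq_nsmul ℝ j, ← Nat.cast_smul_eq_nsmul ℝ (k - j), Nat.cast_sub hj]
    module

variable {v : E}

theorem neg_mem_posRoots (hΦ : IsReducedRootSystem Φ) {α : E} (hα : α ∈ Φ) (hαv : ⟪α, v⟫ < 0) :
    -α ∈ posRoots Φ v :=
  mem_posRoots.2 ⟨hΦ.neg_mem hα, by rwa [inner_neg_left, neg_pos]⟩

theorem sub_mem_posRoots (hΦ : IsReducedRootSystem Φ) (hv : ∀ α ∈ Φ, ⟪α, v⟫ ≠ 0) {α β : E}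
    (hα : IsSimpleRoot Φ v α) (hβ : β ∈ posRoots Φ v) (hmem : β - α ∈ Φ) :
    β - α ∈ posRoots Φ v := by
  refine mem_posRoots.2 ⟨hmem, (hv _ hmem).lt_or_gt.resolve_left fun hneg => ?_⟩
  exact hα.2 β hβ _ (hΦ.neg_mem_posRoots hmem hneg) (by abel)

/-- The root string from `β` to `s_α β` in steps of `-α` never leaves the positive system, since a
change of sign would write `α` as a sum of two positive roots. -/
theorem rootReflection_mem_posRoots (hΦ : IsReducedRootSystem Φ) (hv : ∀ α ∈ Φ, ⟪α, v⟫ ≠ 0)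
    {α β : E} (hα : IsSimpleRoot Φ v α) (hβ : β ∈ posRoots Φ v) (hne : β ≠ α) :
    rootReflection α β ∈ posRoots Φ v := by
  have hαv := (mem_posRoots.1 hα.1).2
  obtain ⟨hβΦ, hβv⟩ := mem_posRoots.1 hβ
  obtain ⟨k, hk⟩ := hΦ.exists_int_coroot α hα.mem β hβΦ
  rcases le_total k 0 with hk0 | hk0
  · refine mem_posRoots.2 ⟨hΦ.rootReflection_mem hα.mem hβΦ, ?_⟩
    rw [rootReflection_apply, hk, inner_sub_left, real_inner_smul_left]
    have hk0' : (k : ℝ) ≤ 0 := by exact_mod_cast hk0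
    linarith [mul_nonpos_of_nonpos_of_nonneg hk0' hαv.le]
  · lift k to ℕ using hk0
    rw [Int.cast_natCast] at hk
    have hβα : β ∉ ℝ ∙ α := fun h => by
      obtain ⟨t, rfl⟩ := Submodule.mem_span_singleton.1 h
      rcases hΦ.eq_one_or_neg_one α hα.mem t hβΦ with rfl | rfl
      · exact hne (one_smul ℝ α)
      · rw [neg_one_smul, inner_neg_left] at hβv
        linarith
    have hstring (j : ℕ) (hj : j ≤ k) : β - j • α ∈ posRoots Φ v := by
      induction j with
      | zero => simpa using hβ
      | succ j ih =>
        have hmem := hΦ.sub_nsmul_mem hα.mem hβΦ hβα hk hj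
        rw [succ_nsmul, ← sub_sub] at hmem ⊢
        exact hΦ.sub_mem_posRoots hv hα (ih (by lia)) hmem
    rw [rootReflection_apply, hk, Nat.cast_smul_eq_nsmul]
    exact hstring k le_rfl

theorem rootReflection_mem_posRoots_erase (hΦ : IsReducedRootSystem Φ) [DecidableEq E]
    (hv : ∀ α ∈ Φ, ⟪α, v⟫ ≠ 0) {α β : E} (hα : IsSimpleRoot Φ v α)
    (hβ : β ∈ (posRoots Φ v).erase α) : rootReflection α β ∈ (posRoots Φ v).erase α := by
  obtain ⟨hne, hβ⟩ := mem_erase.1 hβ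
  refine mem_erase.2 ⟨fun h => ?_, hΦ.rootReflection_mem_posRoots hv hα hβ hne⟩
  have hβ_eq : β = -α := by
    rw [← (ℝ ∙ α)ᗮ.reflection_reflection β, h,
      Submodule.reflection_orthogonalComplement_singleton_eq_neg]
  have hβv := (mem_posRoots.1 hβ).2
  rw [hβ_eq, inner_neg_left] at hβv
  linarith [(mem_posRoots.1 hα.1).2]

theorem coroot_halfSum_posRoots (hΦ : IsReducedRootSystem Φ) (hv : ∀ α ∈ Φ, ⟪α, v⟫ ≠ 0) {α : E}
    (hα : IsSimpleRoot Φ v α) : coroot α (halfSum (posRoots Φ v)) = 1 := by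
  classical
  have hα0 := hΦ.ne_zero hα.mem
  rw [halfSum, ← add_sum_erase _ _ hα.1, map_smul, map_add, coroot_self hα0,
    coroot_sum_eq_zero_of_rootReflection_mem hα0
      fun β => hΦ.rootReflection_mem_posRoots_erase hv hα]
  norm_num

theorem inner_halfSum_posRoots_eq_zero (hΦ : IsReducedRootSystem Φ) {μ α : E} (hα : α ∈ Φ)
    (hαμ : ⟪α, μ⟫ = 0) : ⟪halfSum (posRoots Φ μ), α⟫ = 0 := by
  have hα0 := hΦ.ne_zero hα
  rw [← coroot_eq_zero_iff hα0, halfSum, map_smul,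
    coroot_sum_eq_zero_of_rootReflection_mem hα0, smul_zero]
  intro β hβ
  obtain ⟨hβΦ, hβμ⟩ := mem_posRoots.1 hβ
  refine mem_posRoots.2 ⟨hΦ.rootReflection_mem hα hβΦ, ?_⟩
  rwa [rootReflection_apply, inner_sub_left, real_inner_smul_left, hαμ, mul_zero, sub_zero]

theorem isRegularWeight_rootReflection (hΦ : IsReducedRootSystem Φ) {α x : E}
    (hα : IsSimpleRoot Φ v α) (hx : IsRegularWeight Φ v x) :
    IsRegularWeight Φ v (rootReflection α x) where
  inner_ne_zero β hβ := by
    rw [inner_rootReflection_left]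
    exact hx.inner_ne_zero _ (hΦ.rootReflection_mem hα.mem hβ)
  exists_int_coroot β hβ := by
    obtain ⟨m, hm⟩ := hx.exists_int_coroot α hα
    obtain ⟨n, hn⟩ := hx.exists_int_coroot β hβ
    obtain ⟨k, hk⟩ := hΦ.exists_int_coroot β hβ.mem α hα.mem
    refine ⟨n - m * k, ?_⟩
    rw [rootReflection_apply, map_sub, map_smul, hm, hn, hk, smul_eq_mul]
    push_cast
    rfl

theorem isDominant_sub_halfSum_posRoots (hΦ : IsReducedRootSystem Φ) (hv : ∀ α ∈ Φ, ⟪α, v⟫ ≠ 0)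
    {x : E} (hx : IsRegularWeight Φ v x) (hdom : IsDominant Φ v x) :
    IsDominant Φ v (x - halfSum (posRoots Φ v)) := by
  refine isDominant_of_forall_isSimpleRoot fun α hα => ?_
  have hα0 := hΦ.ne_zero hα.mem
  obtain ⟨n, hn⟩ := hx.exists_int_coroot α hα
  have hpos : 0 < coroot α x :=
    (coroot_pos_iff hα0 x).2 ((hdom α hα.1).lt_of_ne' (hx.inner_ne_zero α hα.mem))
  rw [← coroot_nonneg_iff hα0, map_sub, hΦ.coroot_halfSum_posRoots hv hα, sub_nonneg]
  rw [hn] at hpos ⊢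
  exact_mod_cast hpos

theorem card_inner_rootReflection_neg_lt (hΦ : IsReducedRootSystem Φ)
    (hv : ∀ α ∈ Φ, ⟪α, v⟫ ≠ 0) {α x : E} (hα : IsSimpleRoot Φ v α) (hneg : ⟪x, α⟫ < 0) :
    #{β ∈ posRoots Φ v | ⟪rootReflection α x, β⟫ < 0} < #{β ∈ posRoots Φ v | ⟪x, β⟫ < 0} := by
  classical
  refine lt_of_le_of_lt (card_le_card_of_injOn (rootReflection α) (fun β hβ => ?_)
    (rootReflection α).injective.injOn) (card_erase_lt_of_mem (mem_filter.2 ⟨hα.1, hneg⟩))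
  obtain ⟨hβ, hβneg⟩ := mem_filter.1 hβ
  rw [inner_rootReflection_left] at hβneg
  have hne : β ≠ α := by
    rintro rfl
    rw [Submodule.reflection_orthogonalComplement_singleton_eq_neg, inner_neg_right] at hβneg
    linarith
  obtain ⟨hne', hpos⟩ :=
    mem_erase.1 (hΦ.rootReflection_mem_posRoots_erase hv hα (mem_erase.2 ⟨hne, hβ⟩))
  exact mem_erase.2 ⟨hne', mem_filter.2 ⟨hpos, hβneg⟩⟩

theorem exists_isDominant_of_rootReflection_mem (hΦ : IsReducedRootSystem Φ)
    (hv : ∀ α ∈ Φ, ⟪α, v⟫ ≠ 0) {μ : E} (hμ : IsDominant Φ v μ) {S : Set E}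
    (hS : ∀ α, IsSimpleRoot Φ v α → ∀ x ∈ S, rootReflection α x ∈ S) {x : E} (hx : x ∈ S) :
    ∃ y ∈ S, IsDominant Φ v y ∧ ⟪x, μ⟫ ≤ ⟪y, μ⟫ := by
  induction h : #{β ∈ posRoots Φ v | ⟪x, β⟫ < 0} using Nat.strong_induction_on generalizing x with
  | _ n ih =>
    subst h
    by_cases hdom : ∀ α, IsSimpleRoot Φ v α → 0 ≤ ⟪x, α⟫
    · exact ⟨x, hx, isDominant_of_forall_isSimpleRoot hdom, le_rfl⟩
    push Not at hdom
    obtain ⟨α, hα, hneg⟩ := hdom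
    obtain ⟨y, hyS, hy, hle⟩ :=
      ih _ (hΦ.card_inner_rootReflection_neg_lt hv hα hneg) (hS α hα x hx) rfl
    exact ⟨y, hyS, hy, (inner_le_inner_rootReflection hneg.le (hμ α hα.1)).trans hle⟩

theorem posRoots_eq_filter_inner_ne_zero (hΦ : IsReducedRootSystem Φ)
    (hv : ∀ α ∈ Φ, ⟪α, v⟫ ≠ 0) {μ : E} (hμ : IsDominant Φ v μ) :
    posRoots Φ μ = {α ∈ posRoots Φ v | ⟪α, μ⟫ ≠ 0} := by
  ext α
  rw [mem_filter, mem_posRoots, mem_posRoots]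
  constructor
  · rintro ⟨hα, hαμ⟩
    refine ⟨⟨hα, (hv α hα).lt_or_gt.resolve_left fun hneg => ?_⟩, hαμ.ne'⟩
    have hle := hμ _ (hΦ.neg_mem_posRoots hα hneg)
    rw [inner_neg_right, real_inner_comm] at hle
    linarith
  · rintro ⟨⟨hα, hαv⟩, hαμ⟩
    have hle := hμ α (mem_posRoots.2 ⟨hα, hαv⟩)
    rw [real_inner_comm] at hle
    exact ⟨hα, hle.lt_of_ne' hαμ⟩

theorem add_halfSum_filter_sub_halfSum_posRoots (hΦ : IsReducedRootSystem Φ)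
    (hv : ∀ α ∈ Φ, ⟪α, v⟫ ≠ 0) {μ : E} (hμ : IsDominant Φ v μ) :
    μ + halfSum {α ∈ posRoots Φ v | ⟪α, μ⟫ = 0} - halfSum (posRoots Φ v) =
      μ - halfSum (posRoots Φ μ) := by
  have hsplit : halfSum {α ∈ posRoots Φ v | ⟪α, μ⟫ = 0} + halfSum (posRoots Φ μ) =
      halfSum (posRoots Φ v) := by
    rw [hΦ.posRoots_eq_filter_inner_ne_zero hv hμ, halfSum, halfSum, halfSum, ← smul_add,
      sum_filter_add_sum_filter_not]
  rw [← hsplit]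
  abel

theorem isRegularWeight_of_sub_halfSum_posRoots (hΦ : IsReducedRootSystem Φ)
    (hv : ∀ α ∈ Φ, ⟪α, v⟫ ≠ 0) {x : E} (hreg : ∀ α ∈ Φ, ⟪x, α⟫ ≠ 0)
    (hint : ∀ α, IsSimpleRoot Φ v α → ∃ n : ℤ, coroot α (x - halfSum (posRoots Φ v)) = n) :
    IsRegularWeight Φ v x where
  inner_ne_zero := hreg
  exists_int_coroot α hα := by
    obtain ⟨n, hn⟩ := hint α hα
    rw [map_sub, hΦ.coroot_halfSum_posRoots hv hα, sub_eq_iff_eq_add] at hn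
    exact ⟨n + 1, by rw [hn]; push_cast; rfl⟩

end IsReducedRootSystem

theorem admissible_shift_regular_is_admissible_general
    {E : Type*} [NormedAddCommGroup E] [InnerProductSpace ℝ E] {Φ : Finset E}
    (hΦ : IsReducedRootSystem Φ) {v : E} (hv : ∀ α ∈ Φ, ⟪α, v⟫ ≠ 0)
    {μ : E} (hμ : IsDominant Φ v μ)
    (hadm : ∀ α ∈ Φ, ∃ n : ℤ, coroot α (μ - halfSum (posRoots Φ μ)) = n)
    (hreg : ∀ α ∈ Φ, ⟪μ + halfSum {α ∈ posRoots Φ v | ⟪α, μ⟫ = 0}, α⟫ ≠ 0) :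
    IsDominant Φ v (μ + halfSum {α ∈ posRoots Φ v | ⟪α, μ⟫ = 0} - halfSum (posRoots Φ v)) ∧
      μ + halfSum {α ∈ posRoots Φ v | ⟪α, μ⟫ = 0} - halfSum (posRoots Φ v) =
        μ - halfSum (posRoots Φ μ) ∧
      ∀ α ∈ posRoots Φ v, ⟪α, μ⟫ = 0 →
        ⟪μ + halfSum {α ∈ posRoots Φ v | ⟪α, μ⟫ = 0} - halfSum (posRoots Φ v), α⟫ = 0 := by
  have hshift := hΦ.add_halfSum_filter_sub_halfSum_posRoots hv hμ
  set lam := μ + halfSum {α ∈ posRoots Φ v | ⟪α, μ⟫ = 0}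
  have horth : ∀ α ∈ posRoots Φ v, ⟪α, μ⟫ = 0 → ⟪lam - halfSum (posRoots Φ v), α⟫ = 0 := by
    intro α hα hαμ
    rw [hshift, inner_sub_left, real_inner_comm, hαμ,
      hΦ.inner_halfSum_posRoots_eq_zero (mem_posRoots.1 hα).1 hαμ, sub_zero]
  have hlam : IsRegularWeight Φ v lam :=
    hΦ.isRegularWeight_of_sub_halfSum_posRoots hv hreg fun α hα => hshift ▸ hadm α hα.mem
  obtain ⟨y, ⟨hnorm, hy⟩, hdom, hle⟩ := hΦ.exists_isDominant_of_rootReflection_mem hv hμ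
    (S := {x | ‖x‖ = ‖lam‖ ∧ IsRegularWeight Φ v x})
    (fun α hα x hx => ⟨((rootReflection α).norm_map x).trans hx.1,
      hΦ.isRegularWeight_rootReflection hα hx.2⟩) ⟨rfl, hlam⟩
  have hy_dom := hΦ.isDominant_sub_halfSum_posRoots hv hy hdom
  have hy_eq : y = lam := eq_add_halfSum_of_norm_eq (filter_subset _ _)
    (fun α hα => horth α (mem_filter.1 hα).1 (mem_filter.1 hα).2) hy_dom hnorm hle
  exact ⟨hy_eq ▸ hy_dom, hshift, horth⟩

theorem admissible_shift_regular_is_admissible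
    {E : Type*} [NormedAddCommGroup E] [InnerProductSpace ℝ E] [FiniteDimensional ℝ E]
    (Δ : Finset E)
    (hΔ0 : (0 : E) ∉ Δ)
    (hΔred : ∀ α ∈ Δ, ∀ t : ℝ, t • α ∈ Δ → t = 1 ∨ t = -1)
    (hΔrefl : ∀ α ∈ Δ, ∀ β ∈ Δ, β - (2 * ⟪β, α⟫ / ⟪α, α⟫) • α ∈ Δ)
    (hΔcrys : ∀ α ∈ Δ, ∀ β ∈ Δ, ∃ n : ℤ, 2 * ⟪β, α⟫ / ⟪α, α⟫ = (n : ℝ))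
    (v : E) (hv : ∀ α ∈ Δ, ⟪α, v⟫ ≠ 0)
    (Δpos : Finset E) (hΔpos : Δpos = Δ.filter (fun α => 0 < ⟪α, v⟫))
    (ρ : E) (hρ : ρ = (2 : ℝ)⁻¹ • ∑ α ∈ Δpos, α)    (μ : E) (hμ : ∀ α ∈ Δpos, 0 ≤ ⟪μ, α⟫)
    (ρμ : E) (hρμ : ρμ = (2 : ℝ)⁻¹ • ∑ α ∈ Δpos.filter (fun α => ⟪α, μ⟫ = 0), α)
    (ρμD : E) (hρμD : ρμD = (2 : ℝ)⁻¹ • ∑ α ∈ Δ.filter (fun α => 0 < ⟪α, μ⟫), α)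
    (hadm : ∀ α ∈ Δ, ∃ n : ℤ, 2 * ⟪μ - ρμD, α⟫ / ⟪α, α⟫ = (n : ℝ))
    (lam : E) (hlam : lam = μ + ρμ)
    (hreg : ∀ α ∈ Δ, ⟪lam, α⟫ ≠ 0) :
    (∀ α ∈ Δpos, 0 ≤ ⟪lam - ρ, α⟫) ∧
    lam - ρ = μ - ρμD ∧
    (∀ α ∈ Δpos, ⟪α, μ⟫ = 0 → ⟪lam - ρ, α⟫ = 0) := by
  subst hρ hρμ hρμD hlam hΔpos
  exact admissible_shift_regular_is_admissible_general ⟨hΔ0, hΔred, hΔrefl, hΔcrys⟩ hv hμ hadm hreg
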